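/- arXiv:2303.17794 — 2 statements merged into one kernel-verified Lean document; each statement's English description precedes it below -/
import Mathlib

section
/- Define f(q,b) = q³b − q²b² − q² + 2qb⁵ + qb + 3b⁴. The set {(q,b) ∈ [−1/√2, 1/√2] × [1/√2, √2] : f(q,b) = 1} is the graph of a smooth, strictly decreasing function q ↦ b(q) on [−1/√2, 1/√2]; in particular, for every q ∈ [−1/√2, 1/√2] there exists a unique b ∈ [1/√2, √2] with f(q,b) = 1, and this b depends smoothly and strictly decreasingly on q, with b(−1/√2) = √2 and b(1/√2) = 1/√2. -/
noncomputable section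

/-- The polynomial `f(q,b) = q³b − q²b² − q² + 2qb⁵ + qb + 3b⁴`. -/
def f (q b : ℝ) : ℝ :=
  q ^ 3 * b - q ^ 2 * b ^ 2 - q ^ 2 + 2 * q * b ^ 5 + q * b + 3 * b ^ 4

/-!
The function `f` is strictly increasing in each variable on the rectangle. In `q` this comes from
`3b ∂f/∂q = (3bq − b² − 1)² + (2b² − 1)(3b⁴ + b² + 1)`; in `b`, the derivative `∂f/∂b` increases
with `q`, so it suffices to check its sign on the edge `q = −1/√2`. Since `f = 1` at the corners
`(1/√2, 1/√2)` and `(−1/√2, √2)`, every vertical segment of the rectangle crosses the level `1`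
exactly once. The resulting `b(q)` is strictly decreasing and continuous by monotonicity, hence
smooth by the implicit function theorem.
-/

open Set Filter Topology
open scoped ContDiff

section MonotoneLevelSet

variable {X α β : Type*} [LinearOrder α] {F : X → α → β} {g : X → α} {c : β}
  {s : Set X} {t : Set α}

theorem strictAntiOn_of_strictMonoOn_of_apply_eq [Preorder X] [Preorder β]
    (hleft : ∀ u ∈ t, StrictMonoOn (fun x ↦ F x u) s) (hright : ∀ x ∈ s, StrictMonoOn (F x) t)
    (hg : MapsTo g s t) (hFg : ∀ x ∈ s, F x (g x) = c) : StrictAntiOn g s := by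
  intro x hx y hy hxy
  by_contra! hle
  have hlt : c < c := calc
    c = F x (g x) := (hFg x hx).symm
    _ < F y (g x) := hleft _ (hg hx) hx hy hxy
    _ ≤ F y (g y) := (hright y hy).monotoneOn (hg hx) (hg hy) hle
    _ = c := hFg y hy
  exact hlt.false

theorem continuousOn_of_strictMonoOn_of_apply_eq [TopologicalSpace X] [TopologicalSpace α]
    [OrderTopology α] [LinearOrder β] [TopologicalSpace β] [OrderClosedTopology β]
    (ht : t.OrdConnected)
    (hleft : ∀ u ∈ t, ContinuousOn (fun x ↦ F x u) s) (hright : ∀ x ∈ s, StrictMonoOn (F x) t)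
    (hg : MapsTo g s t) (hFg : ∀ x ∈ s, F x (g x) = c) : ContinuousOn g s := by
  refine fun x hx ↦ tendsto_order.2 ⟨fun a ha ↦ ?_, fun a ha ↦ ?_⟩
  · by_cases hat : a ∈ t
    · have hlt : F x a < c := hFg x hx ▸ hright x hx hat (hg hx) ha
      filter_upwards [(hleft a hat x hx).eventually_lt_const hlt, self_mem_nhdsWithin] with y hya hy
      exact ((hright y hy).lt_iff_lt hat (hg hy)).1 (hya.trans_eq (hFg y hy).symm)
    · filter_upwards [self_mem_nhdsWithin] with y hy
      by_contra! hle
      exact hat (ht.out (hg hy) (hg hx) ⟨hle, ha.le⟩)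
  · by_cases hat : a ∈ t
    · have hlt : c < F x a := hFg x hx ▸ hright x hx (hg hx) hat ha
      filter_upwards [(hleft a hat x hx).eventually_const_lt hlt, self_mem_nhdsWithin] with y hya hy
      exact ((hright y hy).lt_iff_lt (hg hy) hat).1 ((hFg y hy).trans_lt hya)
    · filter_upwards [self_mem_nhdsWithin] with y hy
      by_contra! hle
      exact hat (ht.out (hg hx) (hg hy) ⟨ha.le, hle⟩)

end MonotoneLevelSet

section ImplicitFunction

theorem isInvertible_fderiv_comp_inr_of_hasDerivAt {𝕜 E : Type*} [NontriviallyNormedField 𝕜]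
    [NormedAddCommGroup E] [NormedSpace 𝕜 E] {F : E × 𝕜 → 𝕜} {p : E × 𝕜} {d : 𝕜}
    (hF : DifferentiableAt 𝕜 F p) (hd : HasDerivAt (fun u ↦ F (p.1, u)) d p.2) (hd0 : d ≠ 0) :
    (fderiv 𝕜 F p ∘L .inr 𝕜 E 𝕜).IsInvertible := by
  have hpartial : (fderiv 𝕜 F p ∘L .inr 𝕜 E 𝕜) 1 = d :=
    (hF.hasFDerivAt.comp_hasDerivAt p.2
      ((hasDerivAt_const p.2 p.1).prodMk (hasDerivAt_id p.2))).unique hd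
  refine ⟨ContinuousLinearEquiv.unitsEquivAut 𝕜 (Units.mk0 d hd0), ?_⟩
  ext
  simpa using hpartial.symm

variable {𝕜 E E' G : Type*} [RCLike 𝕜]
  [NormedAddCommGroup E] [NormedSpace 𝕜 E] [CompleteSpace E]
  [NormedAddCommGroup E'] [NormedSpace 𝕜 E'] [CompleteSpace E']
  [NormedAddCommGroup G] [NormedSpace 𝕜 G] [CompleteSpace G]

theorem contDiffWithinAt_of_eventually_apply_eq {F : E × E' → G} {g : E → E'} {s : Set E} {x : E}
    {n : ℕ∞ω} (hn : n ≠ 0) (hF : ContDiffAt 𝕜 n F (x, g x))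
    (hinv : (fderiv 𝕜 F (x, g x) ∘L .inr 𝕜 E E').IsInvertible) (hg : ContinuousWithinAt g s x)
    (hFg : ∀ᶠ y in 𝓝[s] x, F (y, g y) = F (x, g x)) : ContDiffWithinAt 𝕜 n g s x := by
  have htendsto : Tendsto (fun y ↦ (y, g y)) (𝓝[s] x) (𝓝 (x, g x)) :=
    continuousWithinAt_id.prodMk hg
  have heq : g =ᶠ[𝓝[s] x] hF.implicitFunction hn hinv := by
    filter_upwards [hFg, htendsto.eventually (hF.eventually_apply_eq_iff_implicitFunction hn hinv)]
      with y hy hiff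
    exact (hiff.1 hy).symm
  exact (hF.contDiffAt_implicitFunction hn hinv).contDiffWithinAt.congr_of_eventuallyEq heq
    (hF.implicitFunction_apply_self hn hinv).symm

end ImplicitFunction

/-- The partial derivative `∂f/∂b`, written out as a polynomial. Its positivity gives both the
monotonicity of `f` in `b` and the nondegeneracy required by the implicit function theorem. -/
def partialB (q b : ℝ) : ℝ :=
  q ^ 3 - 2 * q ^ 2 * b + 10 * q * b ^ 4 + q + 12 * b ^ 3

theorem hasDerivAt_f_right (q b : ℝ) : HasDerivAt (f q) (partialB q b) b := by
  have hderiv := ((((((hasDerivAt_id' b).const_mul (q ^ 3)).sub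
    ((hasDerivAt_pow 2 b).const_mul (q ^ 2))).sub_const (q ^ 2)).add
    ((hasDerivAt_pow 5 b).const_mul (2 * q))).add ((hasDerivAt_id' b).const_mul q)).add
    ((hasDerivAt_pow 4 b).const_mul 3)
  refine hderiv.congr_deriv ?_
  unfold partialB
  push_cast
  ring

theorem continuous_f_right (q : ℝ) : Continuous (f q) :=
  continuous_iff_continuousAt.2 fun b ↦ (hasDerivAt_f_right q b).continuousAt

theorem contDiff_uncurry_f {n : ℕ∞ω} : ContDiff ℝ n (Function.uncurry f) := by
  unfold f Function.uncurry
  fun_prop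

theorem one_le_two_mul_sq_of_one_div_sqrt_two_le {b : ℝ} (hb : 1 / √2 ≤ b) : 1 ≤ 2 * b ^ 2 := by
  have hsq : (1 / √2) ^ 2 ≤ b ^ 2 := by gcongr
  rw [div_pow, one_pow, Real.sq_sqrt zero_le_two] at hsq
  linarith

theorem strictMono_f_left {b : ℝ} (hb : 1 / √2 ≤ b) : StrictMono fun q ↦ f q b := by
  intro x y hxy
  have hb0 : 0 < b := (by positivity : 0 < 1 / √2).trans_le hb
  have hb2 : 0 ≤ 2 * b ^ 2 - 1 := sub_nonneg.2 (one_le_two_mul_sq_of_one_div_sqrt_two_le hb)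
  -- A difference quotient keeps the inequality strict where `∂f/∂q` vanishes, at `q = b = 1/√2`.
  have hslope : 12 * b * (f y b - f x b) = (y - x) *
      ((3 * b * (x + y) - 2 * (b ^ 2 + 1)) ^ 2 + 3 * b ^ 2 * (y - x) ^ 2
        + 4 * (2 * b ^ 2 - 1) * (3 * b ^ 4 + b ^ 2 + 1)) := by
    unfold f
    ring
  have hyx : 0 < y - x := sub_pos.2 hxy
  have hpos : 0 < 12 * b * (f y b - f x b) := by
    rw [hslope]
    exact mul_pos hyx (by positivity)
  exact sub_pos.1 (pos_of_mul_pos_right hpos (by positivity))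

theorem strictMono_partialB_left (b : ℝ) : StrictMono fun q ↦ partialB q b := by
  intro x y hxy
  have hslope : 4 * (partialB y b - partialB x b) = (y - x) *
      (3 * (x + y - 4 / 3 * b) ^ 2 + (y - x) ^ 2 + 40 * (b ^ 2 - 1 / 15) ^ 2 + 172 / 45) := by
    unfold partialB
    ring
  have hyx : 0 < y - x := sub_pos.2 hxy
  have hpos : 0 < 4 * (partialB y b - partialB x b) := by
    rw [hslope]
    exact mul_pos hyx (by positivity)
  linarith

theorem partialB_neg_one_div_sqrt_two_pos {b : ℝ} (hb : b ∈ Icc (1 / √2) √2) :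
    0 < partialB (-(1 / √2)) b := by
  have hb2 := one_le_two_mul_sq_of_one_div_sqrt_two_le hb.1
  have hsqrt : 0 < √2 := by positivity
  have hsq : √2 ^ 2 = 2 := Real.sq_sqrt zero_le_two
  rw [← Real.sqrt_div_self'] at hb ⊢
  -- `(7b − 5√2/2)/2` interpolates `∂f/∂b` linearly between `b = √2/2` and `b = √2`.
  have hfactor : partialB (-(√2 / 2)) b =
      √2 / 2 * ((b - √2 / 2) * (√2 - b)) * (10 * b ^ 2 + 3 * √2 * b - 1)
        + (7 * b - 5 * √2 / 2) / 2 := by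
    unfold partialB
    linear_combination
      (-6 * b ^ 3 + √2 / 4 * b ^ 2 + (3 / 4 * √2 ^ 2 + 7 / 4) * b - 3 / 8 * √2) * hsq
  have hb0 : 0 < b := by linarith [hb.1]
  have hends : 0 ≤ (b - √2 / 2) * (√2 - b) := mul_nonneg (sub_nonneg.2 hb.1) (sub_nonneg.2 hb.2)
  have hquad : 0 ≤ 10 * b ^ 2 + 3 * √2 * b - 1 := by
    have hmul : 0 < √2 * b := by positivity
    linarith [hmul]
  have hlin : 0 < (7 * b - 5 * √2 / 2) / 2 := by linarith [hb.1]
  rw [hfactor]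
  positivity

theorem partialB_pos {q b : ℝ} (hq : -(1 / √2) ≤ q) (hb : b ∈ Icc (1 / √2) √2) :
    0 < partialB q b :=
  (partialB_neg_one_div_sqrt_two_pos hb).trans_le ((strictMono_partialB_left b).monotone hq)

theorem strictMonoOn_f_right {q : ℝ} (hq : -(1 / √2) ≤ q) :
    StrictMonoOn (f q) (Icc (1 / √2) √2) :=
  strictMonoOn_of_hasDerivWithinAt_pos (convex_Icc _ _)
    (continuous_f_right q).continuousOn
    (fun b _ ↦ (hasDerivAt_f_right q b).hasDerivWithinAt)
    fun _ hb ↦ partialB_pos hq (interior_subset hb)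

theorem f_one_div_sqrt_two : f (1 / √2) (1 / √2) = 1 := by
  have hsq : √2 ^ 2 = 2 := Real.sq_sqrt zero_le_two
  rw [← Real.sqrt_div_self']
  unfold f
  linear_combination (√2 ^ 4 / 32 + √2 ^ 2 / 4 + 1 / 2) * hsq

theorem f_neg_one_div_sqrt_two_sqrt_two : f (-(1 / √2)) √2 = 1 := by
  have hsq : √2 ^ 2 = 2 := Real.sq_sqrt zero_le_two
  rw [← Real.sqrt_div_self']
  unfold f
  linear_combination (-√2 ^ 4 + 5 / 8 * √2 ^ 2 + 1 / 2) * hsq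

theorem one_div_sqrt_two_le_sqrt_two : 1 / √2 ≤ √2 := by
  rw [← Real.sqrt_div_self']
  exact half_le_self (Real.sqrt_nonneg 2)

theorem existsUnique_f_eq_one {q : ℝ} (hq : q ∈ Icc (-(1 / √2)) (1 / √2)) :
    ∃! b, b ∈ Icc (1 / √2) √2 ∧ f q b = 1 := by
  have hbot : f q (1 / √2) ≤ 1 := calc
    f q (1 / √2) ≤ f (1 / √2) (1 / √2) := (strictMono_f_left le_rfl).monotone hq.2
    _ = 1 := f_one_div_sqrt_two
  have htop : 1 ≤ f q √2 := calc
    1 = f (-(1 / √2)) √2 := f_neg_one_div_sqrt_two_sqrt_two.symm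
    _ ≤ f q √2 := (strictMono_f_left one_div_sqrt_two_le_sqrt_two).monotone hq.1
  obtain ⟨b, hb, hfb⟩ := intermediate_value_Icc one_div_sqrt_two_le_sqrt_two
    (continuous_f_right q).continuousOn ⟨hbot, htop⟩
  exact ⟨b, ⟨hb, hfb⟩, fun b' hb' ↦
    (strictMonoOn_f_right hq.1).injOn hb'.1 hb (hb'.2.trans hfb.symm)⟩

section LevelCurve

variable {g : ℝ → ℝ} {s : Set ℝ} {c : ℝ}

theorem strictAntiOn_of_f_apply_eq (hs : s ⊆ Ici (-(1 / √2))) (hg : MapsTo g s (Icc (1 / √2) √2))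
    (hfg : ∀ q ∈ s, f q (g q) = c) : StrictAntiOn g s :=
  strictAntiOn_of_strictMonoOn_of_apply_eq
    (fun _ hb ↦ (strictMono_f_left hb.1).strictMonoOn s)
    (fun _ hq ↦ strictMonoOn_f_right (hs hq)) hg hfg

theorem contDiffOn_of_f_apply_eq {n : ℕ∞ω} (hs : s ⊆ Ici (-(1 / √2)))
    (hg : MapsTo g s (Icc (1 / √2) √2)) (hfg : ∀ q ∈ s, f q (g q) = c) : ContDiffOn ℝ n g s := by
  have hf : ContDiff ℝ ω (Function.uncurry f) := contDiff_uncurry_f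
  have hcont : ContinuousOn g s := continuousOn_of_strictMonoOn_of_apply_eq ordConnected_Icc
    (fun b _ ↦ (hf.continuous.comp (.prodMk_left b)).continuousOn)
    (fun _ hq ↦ strictMonoOn_f_right (hs hq)) hg hfg
  intro q hq
  have hinv : (fderiv ℝ (Function.uncurry f) (q, g q) ∘L .inr ℝ ℝ ℝ).IsInvertible :=
    isInvertible_fderiv_comp_inr_of_hasDerivAt (hf.differentiable (by simp) _)
      (hasDerivAt_f_right q (g q)) (partialB_pos (hs hq) (hg hq)).ne'
  have hlevel : ∀ᶠ x in 𝓝[s] q, Function.uncurry f (x, g x) = Function.uncurry f (q, g q) := by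
    filter_upwards [self_mem_nhdsWithin] with x hx
    exact (hfg x hx).trans (hfg q hq).symm
  exact (contDiffWithinAt_of_eventually_apply_eq (by simp) hf.contDiffAt hinv
    (hcont q hq) hlevel).of_le le_top

end LevelCurve

theorem stmt14 :
    ∃ g : ℝ → ℝ,
      ContDiffOn ℝ (⊤ : ℕ∞) g (Set.Icc (-(1 / Real.sqrt 2)) (1 / Real.sqrt 2)) ∧
      StrictAntiOn g (Set.Icc (-(1 / Real.sqrt 2)) (1 / Real.sqrt 2)) ∧
      (∀ q ∈ Set.Icc (-(1 / Real.sqrt 2)) (1 / Real.sqrt 2),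
        g q ∈ Set.Icc (1 / Real.sqrt 2) (Real.sqrt 2)) ∧
      {p : ℝ × ℝ | p.1 ∈ Set.Icc (-(1 / Real.sqrt 2)) (1 / Real.sqrt 2) ∧
          p.2 ∈ Set.Icc (1 / Real.sqrt 2) (Real.sqrt 2) ∧ f p.1 p.2 = 1}
        = {p : ℝ × ℝ | p.1 ∈ Set.Icc (-(1 / Real.sqrt 2)) (1 / Real.sqrt 2) ∧ p.2 = g p.1} ∧
      g (-(1 / Real.sqrt 2)) = Real.sqrt 2 ∧
      g (1 / Real.sqrt 2) = 1 / Real.sqrt 2 ∧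
      (∀ q ∈ Set.Icc (-(1 / Real.sqrt 2)) (1 / Real.sqrt 2),
        ∃! b, b ∈ Set.Icc (1 / Real.sqrt 2) (Real.sqrt 2) ∧ f q b = 1) := by
  choose! g hg hguniq using fun q ↦ existsUnique_f_eq_one (q := q)
  simp only [and_imp] at hguniq
  have hmaps : MapsTo g (Icc (-(1 / √2)) (1 / √2)) (Icc (1 / √2) √2) := fun q hq ↦ (hg q hq).1
  have hfg : ∀ q ∈ Icc (-(1 / √2)) (1 / √2), f q (g q) = 1 := fun q hq ↦ (hg q hq).2
  have hle : 1 / √2 ≤ √2 := one_div_sqrt_two_le_sqrt_two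
  have hneg : -(1 / √2) ≤ 1 / √2 := neg_le_self (by positivity)
  refine ⟨g, contDiffOn_of_f_apply_eq Icc_subset_Ici_self hmaps hfg,
    strictAntiOn_of_f_apply_eq Icc_subset_Ici_self hmaps hfg, hmaps, ?_, ?_, ?_,
    fun q hq ↦ existsUnique_f_eq_one hq⟩
  · ext ⟨q, b⟩
    constructor
    · rintro ⟨hq, hb, hfb⟩
      exact ⟨hq, hguniq q hq b hb hfb⟩
    · rintro ⟨hq, rfl : b = g q⟩
      exact ⟨hq, hg q hq⟩
  · exact (hguniq _ (left_mem_Icc.2 hneg) _ (right_mem_Icc.2 hle)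
      f_neg_one_div_sqrt_two_sqrt_two).symm
  · exact (hguniq _ (right_mem_Icc.2 hneg) _ (left_mem_Icc.2 hle) f_one_div_sqrt_two).symm
end
end

section
/- Let P = P_{0,b₀} ⊂ ℝ² with b₀ = 3^{−1/4}, i.e., the pentagon given by the convex hull of (−3^{1/4}, 0), (0, ±1), (3^{−1/4}, ±3^{1/4}). Let I(P) be the 2×2 inertia matrix I(P)_{ij} = ∫_P x_i x_j dx. Then |P| = 3^{1/4}(1 + (2/3)√3), I(P)₁₁ = 3^{1/4}(2/9 + √3/6), I(P)₂₂ = 3^{1/4}(1/6 + (2/9)√3), I(P)₁₂ = 0, and det(|P|²·I₂ − 16·I(P)²) = (1/729)·(12√3 + 17)·(4√3 − 13) < 0. -/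
open MeasureTheory

noncomputable section

/-- The inertia matrix `I(P)_{ij} = ∫_P x_i x_j dx`. -/
def inertia (P : Set (Fin 2 → ℝ)) : Matrix (Fin 2) (Fin 2) ℝ :=
  Matrix.of fun i j => ∫ x in P, x i * x j

/-- The pentagon `P_{0, 3^{-1/4}}`: convex hull of `(−3^{1/4}, 0)`, `(0, ±1)`,
`(3^{−1/4}, ±1)` (here `q = 0`, `b = 3^{-1/4}`, `r = 1`, `c = 1`). -/
def P₀ : Set (Fin 2 → ℝ) :=
  convexHull ℝ
    {![-((3 : ℝ) ^ ((1 : ℝ) / 4)), 0], ![0, 1], ![0, -1],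
      ![(3 : ℝ) ^ (-(1 : ℝ) / 4), 1], ![(3 : ℝ) ^ (-(1 : ℝ) / 4), -1]}

/-!
Slicing a compact plane region that is symmetric about the first axis turns its moments
`∫ z₀ ^ m * z₁ ^ n` into one-variable integrals of its half-width. For the pentagon with vertices
`(-a, 0)`, `(0, ±1)`, `(b, ±1)` the half-width is `min 1 (1 + x / a)`, so the triangle to the left
of the second axis contributes a Beta integral and the rectangle to its right a power of `b`. The
inertia matrix is diagonal by symmetry, hence the determinant is a product of two factors, and
only the factor of the second axis is negative, because `4√3 < 13`.
-/

open Set Matrix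
open scoped Nat

theorem setIntegral_prod_eq_integral_slice {α β E : Type*} [MeasurableSpace α] [MeasurableSpace β]
    [NormedAddCommGroup E] [NormedSpace ℝ E] {μ : Measure α} {ν : Measure β} [SFinite μ] [SFinite ν]
    {t : Set (α × β)} (ht : MeasurableSet t) {f : α × β → E} (hf : IntegrableOn f t (μ.prod ν)) :
    ∫ z in t, f z ∂μ.prod ν = ∫ x, ∫ y in Prod.mk x ⁻¹' t, f (x, y) ∂ν ∂μ := by
  rw [← integral_indicator ht, integral_prod _ (hf.integrable_indicator ht)]
  refine integral_congr_ae (.of_forall fun x => ?_)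
  exact integral_indicator (f := fun y => f (x, y)) (measurable_prodMk_left ht)

theorem integral_pow_neg_self (c : ℝ) (n : ℕ) :
    ∫ y in -c..c, y ^ n = (1 + (-1) ^ n) / (n + 1) * c ^ (n + 1) := by
  rw [integral_pow, neg_pow]
  ring

theorem integral_pow_mul_one_sub_pow (m n : ℕ) :
    ∫ x in (0 : ℝ)..1, x ^ m * (1 - x) ^ n = m ! * n ! / (m + n + 1)! := by
  have beta_eq : Complex.betaIntegral (m + 1) (n + 1) = m ! * n ! / (m + n + 1)! := by
    have re_pos (k : ℕ) : 0 < (k + 1 : ℂ).re := by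
      simp only [Complex.add_re, Complex.natCast_re, Complex.one_re]
      positivity
    have hsum : (m + 1 + (n + 1) : ℂ) = ((m + n + 1 : ℕ) : ℂ) + 1 := by push_cast; ring
    rw [Complex.betaIntegral_eq_Gamma_mul_div _ _ (re_pos m) (re_pos n), hsum]
    simp only [Complex.Gamma_nat_eq_factorial]
  rw [← Complex.ofReal_inj, ← intervalIntegral.integral_ofReal]
  simpa [Complex.betaIntegral] using beta_eq

theorem integral_pow_mul_one_add_div_pow {a : ℝ} (ha : a ≠ 0) (m n : ℕ) :
    ∫ x in -a..0, x ^ m * (1 + x / a) ^ n =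
      (-1) ^ m * a ^ (m + 1) * (m ! * n ! / (m + n + 1)!) := by
  have substitution := intervalIntegral.smul_integral_comp_mul_left (a := 0) (b := 1)
    (fun x => x ^ m * (1 + x / a) ^ n) (-a)
  have integrand (t : ℝ) :
      (-a * t) ^ m * (1 + -a * t / a) ^ n = (-a) ^ m * (t ^ m * (1 - t) ^ n) := by
    rw [show 1 + -a * t / a = 1 - t by field_simp; ring, mul_pow, mul_assoc]
  simp only [integrand, intervalIntegral.integral_const_mul, integral_pow_mul_one_sub_pow,
    mul_zero, mul_one, smul_eq_mul] at substitution
  rw [intervalIntegral.integral_symm, ← substitution, neg_pow a m]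
  ring

theorem det_smul_one_sub_smul_diagonal_sq {ι R : Type*} [Fintype ι] [DecidableEq ι] [CommRing R]
    (r : R) (k : ℕ) (d : ι → R) :
    (r • (1 : Matrix ι ι R) - k • diagonal d ^ 2).det = ∏ i, (r - k * d i ^ 2) := by
  rw [diagonal_pow, ← diagonal_one, ← diagonal_smul, ← diagonal_smul, diagonal_sub, det_diagonal]
  simp

/-- The plane region over the subset `s` of the first axis, symmetric about that axis, whose
vertical slice at `x` is `[-w x, w x]`. -/
def axialRegion (s : Set ℝ) (w : ℝ → ℝ) : Set (Fin 2 → ℝ) :=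
  {z | z 0 ∈ s ∧ |z 1| ≤ w (z 0)}

section AxialRegion

variable {s : Set ℝ} {w : ℝ → ℝ}

theorem measurableSet_axialRegion (hs : MeasurableSet s) (hw : Measurable w) :
    MeasurableSet (axialRegion s w) :=
  (measurable_pi_apply 0 hs).inter <|
    measurableSet_le (f := fun z : Fin 2 → ℝ => |z 1|) (by fun_prop) (by fun_prop)

theorem convex_axialRegion (hw : ConcaveOn ℝ s w) : Convex ℝ (axialRegion s w) := by
  rintro y ⟨hy, hyw⟩ z ⟨hz, hzw⟩ p q hp hq hpq
  refine ⟨hw.1 hy hz hp hq hpq, ?_⟩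
  calc |p * y 1 + q * z 1|
      ≤ p * |y 1| + q * |z 1| := by
        simpa only [abs_mul, abs_of_nonneg hp, abs_of_nonneg hq]
          using abs_add_le (p * y 1) (q * z 1)
    _ ≤ p * w (y 0) + q * w (z 0) := by gcongr
    _ ≤ w (p * y 0 + q * z 0) := hw.2 hy hz hp hq hpq

theorem setIntegral_axialRegion {E : Type*} [NormedAddCommGroup E] [NormedSpace ℝ E]
    (hs : MeasurableSet s) (hw : Measurable w) (hw₀ : ∀ x ∈ s, 0 ≤ w x) {f : (Fin 2 → ℝ) → E}
    (hf : IntegrableOn f (axialRegion s w)) :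
    ∫ z in axialRegion s w, f z = ∫ x in s, ∫ y in -w x..w x, f ![x, y] := by
  let e := (MeasurableEquiv.finTwoArrow (α := ℝ)).symm
  have he : MeasurePreserving e := (volume_preserving_finTwoArrow ℝ).symm
  have slice (x : ℝ) : ∫ y in Prod.mk x ⁻¹' (e ⁻¹' axialRegion s w), f (e (x, y)) =
      s.indicator (fun x => ∫ y in -w x..w x, f ![x, y]) x := by
    by_cases hx : x ∈ s
    · have : Prod.mk x ⁻¹' (e ⁻¹' axialRegion s w) = Icc (-w x) (w x) := by
        ext y
        simp [e, axialRegion, hx, abs_le]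
      rw [this, indicator_of_mem hx, intervalIntegral.integral_of_le (neg_le_self (hw₀ x hx)),
        integral_Icc_eq_integral_Ioc]
      rfl
    · have : Prod.mk x ⁻¹' (e ⁻¹' axialRegion s w) = ∅ := by
        ext y
        simp [e, axialRegion, hx]
      rw [this, indicator_of_notMem hx, setIntegral_empty]
  rw [← he.setIntegral_preimage_emb e.measurableEmbedding, Measure.volume_eq_prod,
    setIntegral_prod_eq_integral_slice (f := fun p => f (e p))
      (e.measurable (measurableSet_axialRegion hs hw))
      ((he.integrableOn_comp_preimage e.measurableEmbedding).2 hf),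
    ← integral_indicator hs]
  exact integral_congr_ae (.of_forall slice)

theorem setIntegral_monomial_axialRegion (hs : MeasurableSet s) (hw : Measurable w)
    (hw₀ : ∀ x ∈ s, 0 ≤ w x) {m n : ℕ}
    (hmn : IntegrableOn (fun z => z 0 ^ m * z 1 ^ n) (axialRegion s w)) :
    ∫ z in axialRegion s w, z 0 ^ m * z 1 ^ n =
      (1 + (-1) ^ n) / (n + 1) * ∫ x in s, x ^ m * w x ^ (n + 1) := by
  rw [setIntegral_axialRegion hs hw hw₀ hmn, ← integral_const_mul]
  refine integral_congr_ae (.of_forall fun x => ?_)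
  simp only [cons_val_zero, cons_val_one, intervalIntegral.integral_const_mul,
    integral_pow_neg_self]
  ring

end AxialRegion

theorem vec_mem_of_convex_of_abs_le {C : Set (Fin 2 → ℝ)} (hC : Convex ℝ C) {x y c : ℝ}
    (hneg : ![x, -c] ∈ C) (hpos : ![x, c] ∈ C) (hy : |y| ≤ c) : ![x, y] ∈ C := by
  have hy' : y ∈ segment ℝ (-c) c := by
    rw [segment_eq_Icc (neg_le_self ((abs_nonneg y).trans hy))]
    exact abs_le.1 hy
  obtain ⟨p, q, hp, hq, hpq, rfl⟩ := hy'
  convert hC hneg hpos hp hq hpq using 1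
  simp [← add_mul, hpq]

theorem axialRegion_subset_of_convex {C : Set (Fin 2 → ℝ)} (hC : Convex ℝ C) {u v : ℝ} {w : ℝ → ℝ}
    (huv : u ≤ v) (hw : ConvexOn ℝ (Icc u v) w) (hu : ![u, w u] ∈ C) (hu' : ![u, -w u] ∈ C)
    (hv : ![v, w v] ∈ C) (hv' : ![v, -w v] ∈ C) : axialRegion (Icc u v) w ⊆ C := by
  rintro z ⟨hz, hzw⟩
  obtain ⟨p, q, hp, hq, hpq, hpqz⟩ : z 0 ∈ segment ℝ u v := by rwa [segment_eq_Icc huv]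
  have chord : |z 1| ≤ p * w u + q * w v := by
    rw [← hpqz] at hzw
    exact hzw.trans (hw.2 (left_mem_Icc.2 huv) (right_mem_Icc.2 huv) hp hq hpq)
  rw [show z = ![z 0, z 1] by ext i; fin_cases i <;> rfl, ← hpqz]
  refine vec_mem_of_convex_of_abs_le hC ?_ ?_ chord
  · convert hC hu' hv' hp hq hpq using 1
    simp [add_comm]
  · convert hC hu hv hp hq hpq using 1
    simp

/-- The pentagon with vertices `(-a, 0)`, `(0, ±1)`, `(b, ±1)`; the paper's `P_{0,b}` is
`pentagon b⁻¹ b`. -/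
def pentagon (a b : ℝ) : Set (Fin 2 → ℝ) :=
  convexHull ℝ {![-a, 0], ![0, 1], ![0, -1], ![b, 1], ![b, -1]}

/-- Half the length of the vertical slice of `pentagon a b` at abscissa `x ∈ [-a, b]`. -/
def pentagonHalfWidth (a x : ℝ) : ℝ := min 1 (1 + x / a)

section Pentagon

variable {a b : ℝ}

theorem concaveOn_pentagonHalfWidth (a : ℝ) {s : Set ℝ} (hs : Convex ℝ s) :
    ConcaveOn ℝ s (pentagonHalfWidth a) := by
  have linear : ConcaveOn ℝ s fun x => x / a := (LinearMap.mulRight ℝ a⁻¹).concaveOn hs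
  exact (concaveOn_const 1 hs).inf ((concaveOn_const 1 hs).add linear)

theorem pentagonHalfWidth_nonneg (ha : 0 < a) {x : ℝ} (hx : -a ≤ x) :
    0 ≤ pentagonHalfWidth a x := by
  refine le_min zero_le_one ?_
  rw [← neg_le_iff_add_nonneg', le_div_iff₀ ha]
  linarith

theorem pentagonHalfWidth_of_nonpos (ha : 0 < a) {x : ℝ} (hx : x ≤ 0) :
    pentagonHalfWidth a x = 1 + x / a :=
  min_eq_right (add_le_of_nonpos_right (div_nonpos_of_nonpos_of_nonneg hx ha.le))

theorem pentagonHalfWidth_of_nonneg (ha : 0 < a) {x : ℝ} (hx : 0 ≤ x) :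
    pentagonHalfWidth a x = 1 :=
  min_eq_left (le_add_of_nonneg_right (by positivity))

theorem continuous_pentagonHalfWidth (a : ℝ) : Continuous (pentagonHalfWidth a) := by
  unfold pentagonHalfWidth
  fun_prop

theorem pentagon_subset_axialRegion (ha : 0 < a) (hb : 0 ≤ b) :
    pentagon a b ⊆ axialRegion (Icc (-a) b) (pentagonHalfWidth a) := by
  refine convexHull_min ?_
    (convex_axialRegion (concaveOn_pentagonHalfWidth a (convex_Icc (-a) b)))
  rintro z (rfl | rfl | rfl | rfl | rfl) <;>
    simp [axialRegion, pentagonHalfWidth_of_nonpos, pentagonHalfWidth_of_nonneg, ha, ha.le, ha.ne',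
      hb] <;> linarith

theorem axialRegion_subset_pentagon (ha : 0 < a) (hb : 0 ≤ b) :
    axialRegion (Icc (-a) b) (pentagonHalfWidth a) ⊆ pentagon a b := by
  have hC : Convex ℝ (pentagon a b) := convex_convexHull ℝ _
  have triangle : axialRegion (Icc (-a) 0) (fun x => 1 + x / a) ⊆ pentagon a b := by
    have hw : ConvexOn ℝ (Icc (-a) 0) fun x => 1 + x / a :=
      (convexOn_const 1 (convex_Icc _ _)).add
        ((LinearMap.mulRight ℝ a⁻¹).convexOn (convex_Icc _ _))
    apply axialRegion_subset_of_convex hC (neg_nonpos.2 ha.le) hw <;>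
      exact subset_convexHull ℝ _ (by simp [ha.ne'])
  have rectangle : axialRegion (Icc 0 b) (fun _ => 1) ⊆ pentagon a b := by
    apply axialRegion_subset_of_convex hC hb (convexOn_const 1 (convex_Icc 0 b)) <;>
      exact subset_convexHull ℝ _ (by simp)
  rintro z ⟨⟨hza, hzb⟩, hzw⟩
  rcases le_total (z 0) 0 with hz | hz
  · exact triangle ⟨⟨hza, hz⟩, hzw.trans (min_le_right _ _)⟩
  · exact rectangle ⟨⟨hz, hzb⟩, hzw.trans (min_le_left _ _)⟩

theorem pentagon_eq_axialRegion (ha : 0 < a) (hb : 0 ≤ b) :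
    pentagon a b = axialRegion (Icc (-a) b) (pentagonHalfWidth a) :=
  (pentagon_subset_axialRegion ha hb).antisymm (axialRegion_subset_pentagon ha hb)

theorem isCompact_pentagon (a b : ℝ) : IsCompact (pentagon a b) :=
  (toFinite _).isCompact_convexHull ℝ

theorem integral_pow_mul_pentagonHalfWidth_pow (ha : 0 < a) (hb : 0 ≤ b) (m n : ℕ) :
    ∫ x in Icc (-a) b, x ^ m * pentagonHalfWidth a x ^ n =
      (-1) ^ m * a ^ (m + 1) * (m ! * n ! / (m + n + 1)!) + b ^ (m + 1) / (m + 1) := by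
  have integrable (u v : ℝ) :
      IntervalIntegrable (fun x => x ^ m * pentagonHalfWidth a x ^ n) volume u v :=
    ((continuous_id.pow m).mul ((continuous_pentagonHalfWidth a).pow n)).intervalIntegrable u v
  have left : ∫ x in -a..0, x ^ m * pentagonHalfWidth a x ^ n =
      ∫ x in -a..0, x ^ m * (1 + x / a) ^ n := by
    refine intervalIntegral.integral_congr fun x hx => ?_
    rw [uIcc_of_le (neg_nonpos.2 ha.le)] at hx
    simp only [pentagonHalfWidth_of_nonpos ha hx.2]
  have right : ∫ x in 0..b, x ^ m * pentagonHalfWidth a x ^ n = ∫ x in 0..b, x ^ m := by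
    refine intervalIntegral.integral_congr fun x hx => ?_
    rw [uIcc_of_le hb] at hx
    simp only [pentagonHalfWidth_of_nonneg ha hx.1, one_pow, mul_one]
  rw [integral_Icc_eq_integral_Ioc, ← intervalIntegral.integral_of_le (by linarith),
    ← intervalIntegral.integral_add_adjacent_intervals (integrable (-a) 0) (integrable 0 b),
    left, right, integral_pow_mul_one_add_div_pow ha.ne', integral_pow,
    zero_pow m.succ_ne_zero, sub_zero]

theorem setIntegral_monomial_pentagon (ha : 0 < a) (hb : 0 ≤ b) (m n : ℕ) :
    ∫ z in pentagon a b, z 0 ^ m * z 1 ^ n =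
      (1 + (-1) ^ n) / (n + 1) *
        ((-1) ^ m * a ^ (m + 1) * (m ! * (n + 1)! / (m + n + 2)!) + b ^ (m + 1) / (m + 1)) := by
  have integrable : IntegrableOn (fun z => z 0 ^ m * z 1 ^ n) (pentagon a b) :=
    ContinuousOn.integrableOn_compact (isCompact_pentagon a b) (by fun_prop)
  rw [pentagon_eq_axialRegion ha hb] at integrable ⊢
  rw [setIntegral_monomial_axialRegion measurableSet_Icc
    (continuous_pentagonHalfWidth a).measurable
    (fun x hx => pentagonHalfWidth_nonneg ha hx.1) integrable,
    integral_pow_mul_pentagonHalfWidth_pow ha hb, ← add_assoc]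

theorem volume_pentagon (ha : 0 < a) (hb : 0 ≤ b) :
    (volume (pentagon a b)).toReal = a + 2 * b := calc
  (volume (pentagon a b)).toReal = ∫ z in pentagon a b, z 0 ^ 0 * z 1 ^ 0 := by
    simp [Measure.real]
  _ = a + 2 * b := by
    rw [setIntegral_monomial_pentagon ha hb]
    simp only [Nat.factorial]
    push_cast
    ring

theorem inertia_pentagon (ha : 0 < a) (hb : 0 ≤ b) :
    inertia (pentagon a b) =
      diagonal ![a ^ 3 / 6 + 2 / 3 * b ^ 3, a / 6 + 2 / 3 * b] := by
  have h₀₀ : ∫ z in pentagon a b, z 0 * z 0 = a ^ 3 / 6 + 2 / 3 * b ^ 3 := calc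
    _ = ∫ z in pentagon a b, z 0 ^ 2 * z 1 ^ 0 := by simp only [sq, pow_zero, mul_one]
    _ = _ := by
      rw [setIntegral_monomial_pentagon ha hb]
      simp only [Nat.factorial]
      push_cast
      ring
  have h₁₁ : ∫ z in pentagon a b, z 1 * z 1 = a / 6 + 2 / 3 * b := calc
    _ = ∫ z in pentagon a b, z 0 ^ 0 * z 1 ^ 2 := by simp only [sq, pow_zero, one_mul]
    _ = _ := by
      rw [setIntegral_monomial_pentagon ha hb]
      simp only [Nat.factorial]
      push_cast
      ring
  have h₀₁ : ∫ z in pentagon a b, z 0 * z 1 = 0 := by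
    simpa using setIntegral_monomial_pentagon ha hb 1 1
  ext i j
  fin_cases i <;> fin_cases j <;> simp [inertia, h₀₀, h₀₁, h₁₁, mul_comm (_ : ℝ)]

end Pentagon

theorem three_rpow_one_div_four_sq : ((3 : ℝ) ^ ((1 : ℝ) / 4)) ^ 2 = √3 := by
  rw [Real.sqrt_eq_rpow, ← Real.rpow_mul_natCast (by norm_num)]
  norm_num

theorem three_rpow_neg_one_div_four :
    (3 : ℝ) ^ (-(1 : ℝ) / 4) = (3 : ℝ) ^ ((1 : ℝ) / 4) * √3 / 3 := by
  rw [Real.sqrt_eq_rpow, ← Real.rpow_add (by norm_num), ← Real.rpow_sub_one (by norm_num)]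
  norm_num

theorem P₀_eq_pentagon :
    P₀ = pentagon ((3 : ℝ) ^ ((1 : ℝ) / 4)) ((3 : ℝ) ^ (-(1 : ℝ) / 4)) :=
  rfl

theorem volume_P₀ :
    (volume P₀).toReal = (3 : ℝ) ^ ((1 : ℝ) / 4) * (1 + 2 / 3 * √3) := by
  rw [P₀_eq_pentagon, volume_pentagon (by positivity) (by positivity),
    three_rpow_neg_one_div_four]
  ring

theorem inertia_P₀ :
    inertia P₀ = diagonal ![(3 : ℝ) ^ ((1 : ℝ) / 4) * (2 / 9 + √3 / 6),
      (3 : ℝ) ^ ((1 : ℝ) / 4) * (1 / 6 + 2 / 9 * √3)] := by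
  have hs : √3 ^ 2 = (3 : ℝ) := Real.sq_sqrt (by norm_num)
  rw [P₀_eq_pentagon, inertia_pentagon (by positivity) (by positivity),
    three_rpow_neg_one_div_four]
  set a := (3 : ℝ) ^ ((1 : ℝ) / 4)
  have ha : a ^ 2 = √3 := three_rpow_one_div_four_sq
  have h₀₀ : a ^ 3 / 6 + 2 / 3 * (a * √3 / 3) ^ 3 = a * (2 / 9 + √3 / 6) := by
    linear_combination (a / 6 + 2 / 81 * a * √3 ^ 3) * ha + 2 / 81 * a * (√3 ^ 2 + 3) * hs
  have h₁₁ : a / 6 + 2 / 3 * (a * √3 / 3) = a * (1 / 6 + 2 / 9 * √3) := by ring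
  rw [h₀₀, h₁₁]

theorem det_P₀ :
    ((volume P₀).toReal ^ 2 • (1 : Matrix (Fin 2) (Fin 2) ℝ) - 16 • inertia P₀ ^ 2).det =
      1 / 729 * (12 * √3 + 17) * (4 * √3 - 13) := by
  have hs : √3 ^ 2 = (3 : ℝ) := Real.sq_sqrt (by norm_num)
  have first_factor :
      (volume P₀).toReal ^ 2 - 16 * ((3 : ℝ) ^ ((1 : ℝ) / 4) * (2 / 9 + √3 / 6)) ^ 2 =
        √3 * (12 * √3 + 17) / 81 := by
    rw [volume_P₀, mul_pow, mul_pow, three_rpow_one_div_four_sq]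
    ring
  have second_factor :
      (volume P₀).toReal ^ 2 - 16 * ((3 : ℝ) ^ ((1 : ℝ) / 4) * (1 / 6 + 2 / 9 * √3)) ^ 2 =
        √3 * (4 * √3 - 13) / 27 := by
    rw [volume_P₀, mul_pow, mul_pow, three_rpow_one_div_four_sq]
    linear_combination -(28 / 81) * √3 * hs
  rw [inertia_P₀, det_smul_one_sub_smul_diagonal_sq, Fin.prod_univ_two]
  simp only [cons_val_zero, cons_val_one, Nat.cast_ofNat, first_factor, second_factor]
  linear_combination (12 * √3 + 17) * (4 * √3 - 13) / 2187 * hs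

theorem stmt17 :
    (volume P₀).toReal = (3 : ℝ) ^ ((1 : ℝ) / 4) * (1 + 2 / 3 * Real.sqrt 3) ∧
    inertia P₀ 0 0 = (3 : ℝ) ^ ((1 : ℝ) / 4) * (2 / 9 + Real.sqrt 3 / 6) ∧
    inertia P₀ 1 1 = (3 : ℝ) ^ ((1 : ℝ) / 4) * (1 / 6 + 2 / 9 * Real.sqrt 3) ∧
    inertia P₀ 0 1 = 0 ∧
    ((volume P₀).toReal ^ 2 • (1 : Matrix (Fin 2) (Fin 2) ℝ) - 16 • inertia P₀ ^ 2).det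
      = 1 / 729 * (12 * Real.sqrt 3 + 17) * (4 * Real.sqrt 3 - 13) ∧
    ((volume P₀).toReal ^ 2 • (1 : Matrix (Fin 2) (Fin 2) ℝ) - 16 • inertia P₀ ^ 2).det < 0 := by
  have h_neg : 1 / 729 * (12 * √3 + 17) * (4 * √3 - 13) < 0 := by
    have h_sqrt : √3 < 13 / 4 := (Real.sqrt_lt' (by norm_num)).2 (by norm_num)
    exact mul_neg_of_pos_of_neg (by positivity) (by linarith)
  refine ⟨volume_P₀, ?_, ?_, ?_, det_P₀, det_P₀.trans_lt h_neg⟩ <;> simp [inertia_P₀]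
end
end
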